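/- arXiv:2410.10649 — 2 statements merged into one kernel-verified Lean document; each statement's English description precedes it below -/
import Mathlib

section
/- Let d ≥ 1. (i) For every α ∈ (0,1) there is a constant C > 0 depending only on α and d such that ∫_{ℝ^d} |1 − e^{−i⟨h,ξ⟩}|² (1 + ‖ξ‖₂²)^{−(α+d/2)} dξ ≤ C ‖h‖₂^{2α} for all h ∈ ℝ^d. (ii) For α = 1 there are constants C > 0 and δ ∈ (0,1), depending only on d, such that ∫_{ℝ^d} |1 − e^{−i⟨h,ξ⟩}|² (1 + ‖ξ‖₂²)^{−(1+d/2)} dξ ≤ C ‖h‖₂² ln(1/‖h‖₂) for all h ∈ ℝ^d with 0 < ‖h‖₂ ≤ δ. -/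
open MeasureTheory

noncomputable section

/-- The Euclidean norm `‖x‖₂` on ℝ^d. -/
def nrm {d : ℕ} (x : Fin d → ℝ) : ℝ := Real.sqrt (∑ j, x j ^ 2)

/-
Since `|1 - e^{-iθ}|² ≤ min(4, θ²)`, the integrand is dominated by a radial function. In polar
coordinates the Jacobian `t^{d-1}` is absorbed by `(1 + t²)^{(d-1)/2}`, so that only the
one-dimensional integral of `min(4, (rt)²) (1 + t²)^{-(α+1/2)}` with `r = ‖h‖` is left. Split it at
`t = 1/r`: beyond that point `4 t^{-1-2α}` contributes `O(r^{2α})`, and below it `r² t^{1-2α}`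
contributes `O(r^{2α})` if `α < 1`. For `α = 1` the latter is `r²/t`, whose integral over `[1, 1/r]`
produces the logarithm, while `[0, 1]` contributes only `O(r²)`.
-/

lemma norm_one_sub_exp_neg_I_mul_sq_le (θ : ℝ) :
    ‖(1 : ℂ) - Complex.exp (-(Complex.I * (θ : ℂ)))‖ ^ 2 ≤ min 4 (θ ^ 2) := by
  have hθ : -(Complex.I * (θ : ℂ)) = Complex.I * ((-θ : ℝ) : ℂ) := by push_cast; ring
  rw [hθ, norm_sub_rev]
  refine le_min ?_ ?_
  · have hsin : ‖2 * Real.sin (-θ / 2)‖ ≤ 2 := by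
      simpa using Real.abs_sin_le_one (-θ / 2)
    rw [Complex.norm_exp_I_mul_ofReal_sub_one]
    calc ‖2 * Real.sin (-θ / 2)‖ ^ 2 ≤ 2 ^ 2 := by gcongr
      _ = 4 := by norm_num
  · calc ‖Complex.exp (Complex.I * ((-θ : ℝ) : ℂ)) - 1‖ ^ 2 ≤ ‖-θ‖ ^ 2 := by
          gcongr
          exact Real.norm_exp_I_mul_ofReal_sub_one_le
      _ = θ ^ 2 := by simp

/-- The radial profile at `t = ‖ξ‖` of the function dominating
`|1 - e^{-i⟨h,ξ⟩}|² (1 + ‖ξ‖²)^{-s}`, where `r = ‖h‖`. -/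
def radialMajorant (s r t : ℝ) : ℝ := min 4 ((r * t) ^ 2) * (1 + t ^ 2) ^ (-s)

section RadialMajorant

open Set

variable {s r t : ℝ}

lemma radialMajorant_nonneg (s r t : ℝ) : 0 ≤ radialMajorant s r t := by
  unfold radialMajorant
  positivity

lemma radialMajorant_zero_left (s t : ℝ) : radialMajorant s 0 t = 0 := by
  simp [radialMajorant]

lemma radialMajorant_le_four_mul (s r t : ℝ) :
    radialMajorant s r t ≤ 4 * (1 + t ^ 2) ^ (-s) := by
  unfold radialMajorant
  gcongr
  exact min_le_left _ _

lemma radialMajorant_le_sq_mul (s r t : ℝ) :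
    radialMajorant s r t ≤ (r * t) ^ 2 * (1 + t ^ 2) ^ (-s) := by
  unfold radialMajorant
  gcongr
  exact min_le_right _ _

lemma one_add_sq_rpow_neg_le (hs : 0 ≤ s) (ht : 0 < t) :
    (1 + t ^ 2) ^ (-s) ≤ t ^ (-(2 * s)) := by
  calc (1 + t ^ 2) ^ (-s) ≤ (t ^ 2) ^ (-s) :=
        Real.rpow_le_rpow_of_nonpos (by positivity) (by linarith) (by linarith)
    _ = t ^ (-(2 * s)) := by
        rw [← Real.rpow_natCast_mul ht.le]
        norm_num

lemma radialMajorant_le_sq (hs : 0 ≤ s) (r t : ℝ) : radialMajorant s r t ≤ (r * t) ^ 2 := by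
  have hweight : (1 + t ^ 2) ^ (-s) ≤ 1 :=
    Real.rpow_le_one_of_one_le_of_nonpos (by nlinarith [sq_nonneg t]) (by linarith)
  exact (radialMajorant_le_sq_mul s r t).trans (mul_le_of_le_one_right (sq_nonneg _) hweight)

lemma radialMajorant_le_four_mul_rpow (hs : 0 ≤ s) (r : ℝ) (ht : 0 < t) :
    radialMajorant s r t ≤ 4 * t ^ (-(2 * s)) := by
  refine (radialMajorant_le_four_mul s r t).trans ?_
  gcongr
  exact one_add_sq_rpow_neg_le hs ht

lemma radialMajorant_le_sq_mul_rpow (hs : 0 ≤ s) (r : ℝ) (ht : 0 < t) :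
    radialMajorant s r t ≤ r ^ 2 * t ^ (2 - 2 * s) := by
  calc radialMajorant s r t ≤ (r * t) ^ 2 * t ^ (-(2 * s)) := by
        refine (radialMajorant_le_sq_mul s r t).trans ?_
        gcongr
        exact one_add_sq_rpow_neg_le hs ht
    _ = r ^ 2 * t ^ (2 - 2 * s) := by
        rw [mul_pow, mul_assoc, ← Real.rpow_two t, ← Real.rpow_add ht, sub_eq_add_neg]

lemma pow_mul_radialMajorant_le (m : ℕ) (s r : ℝ) (ht : 0 ≤ t) :
    t ^ m * radialMajorant (s + m / 2) r t ≤ radialMajorant s r t := by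
  have hpow : t ^ m ≤ (1 + t ^ 2) ^ ((m : ℝ) / 2) := by
    calc t ^ m = (t ^ 2) ^ ((m : ℝ) / 2) := by
          rw [← Real.rpow_natCast_mul ht, Nat.cast_two, mul_div_cancel₀ _ two_ne_zero,
            Real.rpow_natCast]
      _ ≤ (1 + t ^ 2) ^ ((m : ℝ) / 2) := by gcongr; linarith
  calc t ^ m * radialMajorant (s + m / 2) r t
      ≤ (1 + t ^ 2) ^ ((m : ℝ) / 2) * radialMajorant (s + m / 2) r t := by
        gcongr
        exact radialMajorant_nonneg _ r t
    _ = radialMajorant s r t := by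
        rw [radialMajorant, radialMajorant, mul_left_comm, ← Real.rpow_add (by positivity)]
        ring_nf

lemma integrable_radialMajorant_norm {E : Type*} [NormedAddCommGroup E] [NormedSpace ℝ E]
    [FiniteDimensional ℝ E] [MeasurableSpace E] [BorelSpace E] (μ : Measure E)
    [μ.IsAddHaarMeasure] (hs : Module.finrank ℝ E < 2 * s) (r : ℝ) :
    Integrable (fun x : E => radialMajorant s r ‖x‖) μ := by
  have hweight : Integrable (fun x : E => (1 + ‖x‖ ^ 2) ^ (-s)) μ := by
    simpa [neg_div] using integrable_rpow_neg_one_add_norm_sq (μ := μ) hs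
  refine (hweight.const_mul 4).mono' ?_ (.of_forall fun x => ?_)
  · unfold radialMajorant
    exact Measurable.aestronglyMeasurable (by fun_prop)
  · rw [Real.norm_of_nonneg (radialMajorant_nonneg s r ‖x‖)]
    exact radialMajorant_le_four_mul s r ‖x‖

lemma integrable_radialMajorant (hs : 1 / 2 < s) (r : ℝ) : Integrable (radialMajorant s r) := by
  have hnorm := integrable_radialMajorant_norm (E := ℝ) volume (s := s)
    (by rw [Module.finrank_self, Nat.cast_one]; linarith) r
  exact hnorm.congr (.of_forall fun t => by simp [radialMajorant, mul_pow])

lemma integral_Ioi_inv_radialMajorant_le (hs : 1 / 2 < s) (hr : 0 < r) :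
    ∫ t in Ioi r⁻¹, radialMajorant s r t ≤ 4 / (2 * s - 1) * r ^ (2 * s - 1) := by
  have hexp : -(2 * s) < -1 := by linarith
  have hr' : 0 < r⁻¹ := inv_pos.2 hr
  calc ∫ t in Ioi r⁻¹, radialMajorant s r t ≤ ∫ t in Ioi r⁻¹, 4 * t ^ (-(2 * s)) :=
        setIntegral_mono_on (integrable_radialMajorant hs r).integrableOn
          ((integrableOn_Ioi_rpow_of_lt hexp hr').const_mul 4) measurableSet_Ioi
          fun t ht => radialMajorant_le_four_mul_rpow (by linarith) r (hr'.trans ht)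
    _ = 4 / (2 * s - 1) * r ^ (2 * s - 1) := by
        rw [integral_const_mul, integral_Ioi_rpow_of_lt hexp hr',
          show -(2 * s) + 1 = -(2 * s - 1) by ring, Real.inv_rpow hr.le, Real.rpow_neg hr.le,
          inv_inv, neg_div_neg_eq]
        ring

lemma intervalIntegral_zero_inv_radialMajorant_le (hs : 1 / 2 < s) (hs' : s < 3 / 2) (hr : 0 < r) :
    ∫ t in (0)..r⁻¹, radialMajorant s r t ≤ 1 / (3 - 2 * s) * r ^ (2 * s - 1) := by
  have hexp : -1 < 2 - 2 * s := by linarith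
  calc ∫ t in (0)..r⁻¹, radialMajorant s r t ≤ ∫ t in (0)..r⁻¹, r ^ 2 * t ^ (2 - 2 * s) :=
        intervalIntegral.integral_mono_on_of_le_Ioo (inv_pos.2 hr).le
          (integrable_radialMajorant hs r).intervalIntegrable
          ((intervalIntegral.intervalIntegrable_rpow' hexp).const_mul _)
          fun t ht => radialMajorant_le_sq_mul_rpow (by linarith) r ht.1
    _ = 1 / (3 - 2 * s) * (r ^ (2 : ℝ) * r ^ (-(3 - 2 * s))) := by
        rw [intervalIntegral.integral_const_mul, integral_rpow (.inl hexp),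
          show 2 - 2 * s + 1 = 3 - 2 * s by ring, Real.zero_rpow (by linarith), sub_zero,
          Real.inv_rpow hr.le, Real.rpow_neg hr.le, Real.rpow_two]
        ring
    _ = 1 / (3 - 2 * s) * r ^ (2 * s - 1) := by
        rw [← Real.rpow_add hr]
        ring_nf

lemma intervalIntegral_zero_one_radialMajorant_le (hs : 1 / 2 < s) (r : ℝ) :
    ∫ t in (0)..1, radialMajorant s r t ≤ r ^ 2 / 3 := by
  calc ∫ t in (0)..1, radialMajorant s r t ≤ ∫ t in (0)..1, (r * t) ^ 2 :=
        intervalIntegral.integral_mono_on zero_le_one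
          (integrable_radialMajorant hs r).intervalIntegrable
          (Continuous.intervalIntegrable (by fun_prop) _ _)
          fun t _ => radialMajorant_le_sq (by linarith) r t
    _ = r ^ 2 / 3 := by
        simp only [mul_pow, intervalIntegral.integral_const_mul, integral_pow]
        norm_num
        ring

lemma intervalIntegral_one_inv_radialMajorant_le (hr : 0 < r) (hr₁ : r ≤ 1) :
    ∫ t in (1)..r⁻¹, radialMajorant (3 / 2) r t ≤ r ^ 2 * Real.log (1 / r) := by
  have hr' : 1 ≤ r⁻¹ := (one_le_inv₀ hr).2 hr₁
  calc ∫ t in (1)..r⁻¹, radialMajorant (3 / 2) r t ≤ ∫ t in (1)..r⁻¹, r ^ 2 * t⁻¹ := by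
        refine intervalIntegral.integral_mono_on hr'
          (integrable_radialMajorant (by norm_num) r).intervalIntegrable
          (.const_mul (intervalIntegrable_inv_iff.2 <| .inr <|
            notMem_uIcc_of_lt one_pos (inv_pos.2 hr)) _) fun t ht => ?_
        have hmaj := radialMajorant_le_sq_mul_rpow (s := 3 / 2) (by norm_num) r
          (one_pos.trans_le ht.1)
        rwa [show (2 : ℝ) - 2 * (3 / 2) = -1 by norm_num, Real.rpow_neg_one] at hmaj
    _ = r ^ 2 * Real.log (1 / r) := by
        rw [intervalIntegral.integral_const_mul, integral_inv_of_pos one_pos (inv_pos.2 hr),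
          div_one, one_div]

lemma integral_Ioi_zero_radialMajorant_le (hs : 1 / 2 < s) (hs' : s < 3 / 2) (hr : 0 ≤ r) :
    ∫ t in Ioi 0, radialMajorant s r t ≤
      (1 / (3 - 2 * s) + 4 / (2 * s - 1)) * r ^ (2 * s - 1) := by
  rcases hr.eq_or_lt with rfl | hr
  · simp [radialMajorant_zero_left, Real.zero_rpow (by linarith : 2 * s - 1 ≠ 0)]
  · have hint := integrable_radialMajorant hs r
    rw [← intervalIntegral.integral_interval_add_Ioi hint.integrableOn
      (b := r⁻¹) hint.integrableOn, add_mul]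
    exact add_le_add (intervalIntegral_zero_inv_radialMajorant_le hs hs' hr)
      (integral_Ioi_inv_radialMajorant_le hs hr)

lemma integral_Ioi_zero_radialMajorant_three_halves_le (hr : 0 < r) (hr₁ : r ≤ 1) :
    ∫ t in Ioi 0, radialMajorant (3 / 2) r t ≤ r ^ 2 * (7 / 3 + Real.log (1 / r)) := by
  have hs : (1 / 2 : ℝ) < 3 / 2 := by norm_num
  have hint := integrable_radialMajorant hs r
  have htail : ∫ t in Ioi r⁻¹, radialMajorant (3 / 2) r t ≤ 2 * r ^ 2 := by
    convert! integral_Ioi_inv_radialMajorant_le hs hr using 2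
    · norm_num
    · rw [← Real.rpow_two]
      norm_num
  rw [← intervalIntegral.integral_interval_add_Ioi hint.integrableOn
      (b := r⁻¹) hint.integrableOn,
    ← intervalIntegral.integral_add_adjacent_intervals (b := 1) hint.intervalIntegrable
      hint.intervalIntegrable]
  linarith [intervalIntegral_zero_one_radialMajorant_le hs r,
    intervalIntegral_one_inv_radialMajorant_le hr hr₁]

end RadialMajorant

/-- The integral of `|1 - e^{-iL(ξ)}|² (1 + ‖ξ‖²)^{-s}` with respect to `μ`. The linear functional
`L` takes the place of `⟨h, ·⟩`, so that no inner product is needed. -/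
def weightedPhaseIntegral {E : Type*} [NormedAddCommGroup E] [NormedSpace ℝ E]
    [MeasurableSpace E] (μ : Measure E) (s : ℝ) (L : StrongDual ℝ E) : ℝ :=
  ∫ ξ, ‖(1 : ℂ) - Complex.exp (-(Complex.I * (L ξ : ℂ)))‖ ^ 2 * (1 + ‖ξ‖ ^ 2) ^ (-s) ∂μ

section WeightedPhaseIntegral

open Set Module

variable {E : Type*} [NormedAddCommGroup E] [NormedSpace ℝ E] [FiniteDimensional ℝ E]
  [MeasurableSpace E] [BorelSpace E] (μ : Measure E) [μ.IsAddHaarMeasure]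

lemma weightedPhaseIntegral_le_integral_radialMajorant_norm {s : ℝ} (hs : finrank ℝ E < 2 * s)
    (L : StrongDual ℝ E) :
    weightedPhaseIntegral μ s L ≤ ∫ ξ, radialMajorant s ‖L‖ ‖ξ‖ ∂μ := by
  refine integral_mono_of_nonneg (.of_forall fun ξ => by positivity)
    (integrable_radialMajorant_norm μ hs _) (.of_forall fun ξ => ?_)
  have hL : L ξ ^ 2 ≤ (‖L‖ * ‖ξ‖) ^ 2 := sq_le_sq' (neg_le_of_abs_le (L.le_opNorm ξ))
    (le_of_abs_le (L.le_opNorm ξ))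
  simp only [radialMajorant]
  gcongr
  exact (norm_one_sub_exp_neg_I_mul_sq_le (L ξ)).trans (min_le_min_left 4 hL)

variable [Nontrivial E]

lemma integral_radialMajorant_norm_le {α : ℝ} (hα : 0 < α) (r : ℝ) :
    ∫ ξ : E, radialMajorant (α + finrank ℝ E / 2) r ‖ξ‖ ∂μ ≤
      μ.toSphere.real univ * ∫ t in Ioi 0, radialMajorant (α + 1 / 2) r t := by
  have hexp : α + finrank ℝ E / 2 = α + 1 / 2 + (finrank ℝ E - 1 : ℕ) / 2 := by
    rw [Nat.cast_pred finrank_pos]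
    ring
  have hint := (integrable_fun_norm_addHaar μ).1 <|
    integrable_radialMajorant_norm (E := E) μ (s := α + finrank ℝ E / 2) (by linarith) r
  rw [integral_fun_norm_addHaar, μ.toSphere_real_apply_univ, nsmul_eq_mul, smul_eq_mul,
    ← mul_assoc]
  refine mul_le_mul_of_nonneg_left ?_ (by positivity)
  refine setIntegral_mono_on hint (integrable_radialMajorant (by linarith) r).integrableOn
    measurableSet_Ioi fun t ht => ?_
  rw [hexp]
  exact pow_mul_radialMajorant_le _ _ r (le_of_lt ht)

lemma weightedPhaseIntegral_le {α : ℝ} (hα : 0 < α) (L : StrongDual ℝ E) :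
    weightedPhaseIntegral μ (α + finrank ℝ E / 2) L ≤
      μ.toSphere.real univ * ∫ t in Ioi 0, radialMajorant (α + 1 / 2) ‖L‖ t :=
  (weightedPhaseIntegral_le_integral_radialMajorant_norm μ (by linarith) L).trans
    (integral_radialMajorant_norm_le μ hα ‖L‖)

lemma weightedPhaseIntegral_le_rpow {α : ℝ} (hα : 0 < α) (hα₁ : α < 1) (L : StrongDual ℝ E) :
    weightedPhaseIntegral μ (α + finrank ℝ E / 2) L ≤
      μ.toSphere.real univ * (1 / (2 - 2 * α) + 2 / α) * ‖L‖ ^ (2 * α) := by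
  have hradial := integral_Ioi_zero_radialMajorant_le (s := α + 1 / 2) (by linarith)
    (by linarith) (norm_nonneg L)
  rw [show 3 - 2 * (α + 1 / 2) = 2 - 2 * α by ring, show 2 * (α + 1 / 2) - 1 = 2 * α by ring,
    show 4 / (2 * α) = 2 / α by field_simp; norm_num] at hradial
  rw [mul_assoc]
  exact (weightedPhaseIntegral_le μ hα L).trans (by gcongr)

lemma weightedPhaseIntegral_one_le_log {L : StrongDual ℝ E} (hL : 0 < ‖L‖)
    (hL' : ‖L‖ ≤ Real.exp (-1)) :
    weightedPhaseIntegral μ (1 + finrank ℝ E / 2) L ≤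
      μ.toSphere.real univ * (10 / 3) * (‖L‖ ^ 2 * Real.log (1 / ‖L‖)) := by
  have hlog : 1 ≤ Real.log (1 / ‖L‖) := by
    rw [one_div, Real.log_inv]
    linarith [(Real.log_le_iff_le_exp hL).2 hL']
  have hradial := integral_Ioi_zero_radialMajorant_three_halves_le hL
    (hL'.trans (Real.exp_le_one_iff.2 (by norm_num)))
  rw [show (3 / 2 : ℝ) = 1 + 1 / 2 by norm_num] at hradial
  rw [mul_assoc]
  refine (weightedPhaseIntegral_le μ one_pos L).trans ?_
  gcongr
  refine hradial.trans ?_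
  calc ‖L‖ ^ 2 * (7 / 3 + Real.log (1 / ‖L‖))
    _ ≤ ‖L‖ ^ 2 * (7 / 3 * Real.log (1 / ‖L‖) + Real.log (1 / ‖L‖)) := by
        gcongr
        linarith
    _ = 10 / 3 * (‖L‖ ^ 2 * Real.log (1 / ‖L‖)) := by ring

end WeightedPhaseIntegral

section Coordinates

variable {d : ℕ}

lemma nrm_eq_norm_innerSL_toLp (h : Fin d → ℝ) : nrm h = ‖innerSL ℝ (WithLp.toLp 2 h)‖ := by
  simp [nrm, EuclideanSpace.norm_eq]

lemma integral_pi_eq_weightedPhaseIntegral (s : ℝ) (h : Fin d → ℝ) :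
    ∫ ξ : Fin d → ℝ, ‖(1 : ℂ) - Complex.exp (-(Complex.I * ((∑ j, h j * ξ j : ℝ) : ℂ)))‖ ^ 2 *
        (1 + ∑ j, ξ j ^ 2) ^ (-s) =
      weightedPhaseIntegral volume s (innerSL ℝ (WithLp.toLp 2 h)) := by
  rw [weightedPhaseIntegral, ← (PiLp.volume_preserving_toLp (Fin d)).integral_comp
    (MeasurableEquiv.toLp 2 (Fin d → ℝ)).measurableEmbedding]
  simp [EuclideanSpace.norm_sq_eq, PiLp.inner_apply, mul_comm]

end Coordinates

theorem stmt8_general {E : Type*} [NormedAddCommGroup E] [NormedSpace ℝ E] [FiniteDimensional ℝ E]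
    [Nontrivial E] [MeasurableSpace E] [BorelSpace E] (μ : Measure E) [μ.IsAddHaarMeasure] :
    (∀ α : ℝ, 0 < α → α < 1 → ∃ C : ℝ, 0 < C ∧ ∀ L : StrongDual ℝ E,
      weightedPhaseIntegral μ (α + Module.finrank ℝ E / 2) L ≤ C * ‖L‖ ^ (2 * α)) ∧
    ∃ C : ℝ, 0 < C ∧ ∃ δ : ℝ, 0 < δ ∧ δ < 1 ∧ ∀ L : StrongDual ℝ E, 0 < ‖L‖ → ‖L‖ ≤ δ →
      weightedPhaseIntegral μ (1 + Module.finrank ℝ E / 2) L ≤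
        C * (‖L‖ ^ 2 * Real.log (1 / ‖L‖)) := by
  have hsphere : 0 < μ.toSphere.real Set.univ :=
    ENNReal.toReal_pos (Measure.measure_univ_ne_zero.2 μ.toSphere_ne_zero) (measure_ne_top _ _)
  refine ⟨fun α hα hα₁ => ⟨_, ?_, weightedPhaseIntegral_le_rpow μ hα hα₁⟩,
    _, ?_, Real.exp (-1), Real.exp_pos _, Real.exp_lt_one_iff.2 (by norm_num),
    fun L => weightedPhaseIntegral_one_le_log μ⟩
  · have : 0 < 2 - 2 * α := by linarith
    positivity
  · positivity

/-- weighted integrals of `|1 − e^{−i⟨h,ξ⟩}|²`.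
(i) For `α ∈ (0,1)`: `∫ |1 − e^{−i⟨h,ξ⟩}|² (1+‖ξ‖₂²)^{−(α+d/2)} dξ ≤ C ‖h‖₂^{2α}` for all `h`.
(ii) For `α = 1`: the same integral is `≤ C ‖h‖₂² ln(1/‖h‖₂)` for all small `h ≠ 0`. -/
theorem stmt8 (d : ℕ) (hd : 1 ≤ d) :
    (∀ α : ℝ, 0 < α → α < 1 → ∃ C : ℝ, 0 < C ∧
      ∀ h : Fin d → ℝ,
        (∫ ξ : Fin d → ℝ,
            ‖(1 : ℂ) - Complex.exp (-(Complex.I * ((∑ j, h j * ξ j : ℝ) : ℂ)))‖ ^ 2 *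
              (1 + ∑ j, ξ j ^ 2) ^ (-(α + (d : ℝ) / 2))) ≤
          C * nrm h ^ (2 * α)) ∧
    (∃ C : ℝ, 0 < C ∧ ∃ δ : ℝ, 0 < δ ∧ δ < 1 ∧
      ∀ h : Fin d → ℝ, 0 < nrm h → nrm h ≤ δ →
        (∫ ξ : Fin d → ℝ,
            ‖(1 : ℂ) - Complex.exp (-(Complex.I * ((∑ j, h j * ξ j : ℝ) : ℂ)))‖ ^ 2 *
              (1 + ∑ j, ξ j ^ 2) ^ (-((1 : ℝ) + (d : ℝ) / 2))) ≤
          C * (nrm h ^ (2 : ℕ) * Real.log (1 / nrm h))) := by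
  have : Nonempty (Fin d) := Fin.pos_iff_nonempty.1 hd
  have hgeneral := stmt8_general (volume : Measure (EuclideanSpace ℝ (Fin d)))
  simp only [finrank_euclideanSpace_fin] at hgeneral
  simp only [integral_pi_eq_weightedPhaseIntegral, nrm_eq_norm_innerSL_toLp]
  obtain ⟨hlt, C, hC, δ, hδ, hδ₁, hone⟩ := hgeneral
  exact ⟨fun α hα hα₁ => (hlt α hα hα₁).imp fun _ => .imp_right fun hbound _ => hbound _,
    C, hC, δ, hδ, hδ₁, fun _ => hone _⟩
end
end

section
/- Let α > 0, d ≥ 1, ℓ = ⌊α⌋⁻, and let A = {w_1, …, w_n} ⊂ ℝ^d be any finite set of distinct points such that the Matérn kernel matrix K_{A,A} is invertible. Define the conditional kernel K̃(x₁, x₂) = K(x₁, x₂) − K_{x₁,A} K_{A,A}⁻¹ K_{A,x₂} on ℝ^d × ℝ^d. Then K̃ is 2ℓ-times continuously differentiable on ℝ^{2d}, and there is a constant C > 0 depending only on α and d (in particular, independent of A and of n) such that for every multi-index k with |k| ≤ ℓ and all x₁, x₂, x ∈ ℝ^d: |K̃^{(k,k)}(x₁, x₂)| ≤ C and 0 ≤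 K̃^{(k,k)}(x, x) ≤ K^{(k,k)}(x, x). -/
open Matrix MeasureTheory

noncomputable section

/-- The Matérn function with regularity `α` on ℝ^d (Fourier normalization):
`K_α(x) = ∫ cos⟨x,ξ⟩ (1+‖ξ‖₂²)^{-(α+d/2)} dξ`. -/
def matern (α : ℝ) (d : ℕ) (x : Fin d → ℝ) : ℝ :=
  ∫ ξ : Fin d → ℝ, Real.cos (∑ j, x j * ξ j) * (1 + ∑ j, ξ j ^ 2) ^ (-(α + (d : ℝ) / 2))

/-- `⌊α⌋⁻`, the largest integer strictly smaller than `α` (for `α > 0`). -/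
def lbelow (α : ℝ) : ℕ := Nat.ceil α - 1

/-- `α` is a (nonnegative) integer. -/
def IsNatVal (α : ℝ) : Prop := ∃ n : ℕ, α = n

/-- Partial derivative in the `j`-th coordinate. -/
def pder (d : ℕ) (j : Fin d) (f : (Fin d → ℝ) → ℝ) : (Fin d → ℝ) → ℝ :=
  fun x => fderiv ℝ f x (Pi.single j 1)

/-- The iterated partial derivative `∂^k` associated with a multi-index `k ∈ ℕ^d`. -/
def mder (d : ℕ) (k : Fin d → ℕ) (f : (Fin d → ℝ) → ℝ) : (Fin d → ℝ) → ℝ :=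
  (List.finRange d).foldr (fun j g => (pder d j)^[k j] g) f

/-- Mixed derivative `F^{(k₁,k₂)}(x₁,x₂) = ∂^{k₁}_{x₁} ∂^{k₂}_{x₂} F(x₁,x₂)`. -/
def mder2 (d : ℕ) (k₁ k₂ : Fin d → ℕ) (F : (Fin d → ℝ) → (Fin d → ℝ) → ℝ)
    (x₁ x₂ : Fin d → ℝ) : ℝ :=
  mder d k₁ (fun y => mder d k₂ (F y) x₂) x₁

/-- The Matérn kernel matrix `K_{A,A} = (K(w_i, w_j))_{i,j}`. -/
def maternMat (α : ℝ) (d : ℕ) {n : ℕ} (w : Fin n → Fin d → ℝ) :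
    Matrix (Fin n) (Fin n) ℝ :=
  Matrix.of fun i j => matern α d (w i - w j)

/-- The Matérn kernel column vector `K_{A,x} = (K(w_i, x))_i`. -/
def maternVec (α : ℝ) (d : ℕ) {n : ℕ} (w : Fin n → Fin d → ℝ) (x : Fin d → ℝ) :
    Fin n → ℝ :=
  fun i => matern α d (w i - x)

/-- The conditional kernel `K̃(x₁,x₂) = K(x₁,x₂) − K_{x₁,A} K_{A,A}⁻¹ K_{A,x₂}`. -/
def condK (α : ℝ) (d : ℕ) {n : ℕ} (w : Fin n → Fin d → ℝ) (x₁ x₂ : Fin d → ℝ) : ℝ :=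
  matern α d (x₁ - x₂) -
    maternVec α d w x₁ ⬝ᵥ ((maternMat α d w)⁻¹ *ᵥ maternVec α d w x₂)

/-!
A stationary kernel with spectral measure `μ` is the Gram kernel of the plane waves `e^{i⟨x, ·⟩}` in
the real Hilbert space `L²(μ)`, and conditioning it on a finite set of nodes replaces each plane
wave by its projection onto the orthogonal complement of the plane waves at the nodes. If `μ` has
finite moments of order `2N`, then for `|k| ≤ N` the mixed derivative `∂^k_x ∂^k_y` acts on the two
plane waves alone and turns `e^{i⟨x, ξ⟩}` into `(iξ)^k e^{i⟨x, ξ⟩}`, an element of `L²(μ)` whose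
norm is bounded independently of `x` and the nodes. Since projections are positive contractions, the
bounds follow from the Cauchy–Schwarz inequality. The Matérn spectral measure has finite moments of
order `2N` when `N < α`.
-/

section Kernel

open Submodule

variable {X ι E : Type*} [NormedAddCommGroup E] [InnerProductSpace ℝ E]

instance finiteDimensional_span_range [Finite ι] (φ : ι → E) :
    FiniteDimensional ℝ (span ℝ (Set.range φ)) :=
  FiniteDimensional.span_of_finite ℝ (Set.finite_range φ)

variable [Fintype ι] [DecidableEq ι]

/-- The conditional kernel `K(x, y) − K_{x,A} K_{A,A}⁻¹ K_{A,y}` of a kernel `K` on a set `X`, given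
the values at the nodes `A = {w i}`; the row vector is encoded as `K_{A,x}`, which is legitimate for
symmetric `K`. `condK` is the Matérn case. -/
def condKernel (K : X → X → ℝ) (w : ι → X) (x y : X) : ℝ :=
  K x y - (fun i => K (w i) x) ⬝ᵥ ((Matrix.of fun i j => K (w i) (w j))⁻¹ *ᵥ fun i => K (w i) y)

lemma starProjection_span_range_eq_sum_gram_inv {φ : ι → E} (hdet : IsUnit (gram ℝ φ).det) (v : E) :
    (span ℝ (Set.range φ)).starProjection v =
      ∑ i, ((gram ℝ φ)⁻¹ *ᵥ fun i => inner ℝ (φ i) v) i • φ i := by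
  set b := (gram ℝ φ)⁻¹ *ᵥ fun i => inner ℝ (φ i) v with hb
  have normal_equations (i : ι) : inner ℝ (φ i) (∑ j, b j • φ j) = inner ℝ (φ i) v := by
    have h : gram ℝ φ *ᵥ b = fun i => inner ℝ (φ i) v := by
      rw [hb, mulVec_mulVec, mul_nonsing_inv _ hdet, one_mulVec]
    rw [← congrFun h i, inner_sum]
    simp only [mulVec, dotProduct, gram_apply, real_inner_smul_right, mul_comm]
  refine eq_starProjection_of_mem_orthogonal
    (sum_mem fun i _ => smul_mem _ _ (subset_span (Set.mem_range_self i))) ?_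
  rintro _ hu
  obtain ⟨c, rfl⟩ := (mem_span_range_iff_exists_fun ℝ).1 hu
  simp only [sum_inner, real_inner_smul_left, inner_sub_right, normal_equations, sub_self]

lemma condKernel_eq_inner_starProjection {K : X → X → ℝ} {Φ : X → E}
    (hK : ∀ x y, K x y = inner ℝ (Φ x) (Φ y)) {w : ι → X}
    (hdet : IsUnit (Matrix.of fun i j => K (w i) (w j)).det) (x y : X) :
    condKernel K w x y = inner ℝ (Φ x) ((span ℝ (Set.range (Φ ∘ w)))ᗮ.starProjection (Φ y)) := by
  have hgram : Matrix.of (fun i j => K (w i) (w j)) = gram ℝ (Φ ∘ w) := by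
    ext i j
    exact hK _ _
  rw [hgram] at hdet
  rw [starProjection_orthogonal_val, starProjection_span_range_eq_sum_gram_inv hdet,
    inner_sub_right, inner_sum, condKernel, hgram]
  simp only [hK, dotProduct, real_inner_smul_right, real_inner_comm, mul_comm, Function.comp_apply]

lemma contDiff_condKernel {V : Type*} [NormedAddCommGroup V] [NormedSpace ℝ V] {K : V → V → ℝ}
    {m : WithTop ℕ∞} (hK : ContDiff ℝ m fun p : V × V => K p.1 p.2) (w : ι → V) :
    ContDiff ℝ m fun p : V × V => condKernel K w p.1 p.2 := by
  have hfst (a : V) : ContDiff ℝ m fun p : V × V => K a p.1 :=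
    hK.comp (contDiff_const.prodMk contDiff_fst)
  have hsnd (a : V) : ContDiff ℝ m fun p : V × V => K a p.2 :=
    hK.comp (contDiff_const.prodMk contDiff_snd)
  simp only [condKernel, mulVec, dotProduct]
  exact hK.sub (ContDiff.sum fun i _ => (hfst _).mul
    (ContDiff.sum fun j _ => contDiff_const.mul (hsnd _)))

end Kernel

section StarProjection

variable {E : Type*} [NormedAddCommGroup E] [InnerProductSpace ℝ E] (U : Submodule ℝ E)
  [U.HasOrthogonalProjection]

lemma real_inner_starProjection_self_nonneg (v : E) : 0 ≤ inner ℝ v (U.starProjection v) := by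
  rw [real_inner_comm]
  exact U.re_inner_starProjection_nonneg v

lemma abs_real_inner_starProjection_le (u v : E) :
    |inner ℝ u (U.starProjection v)| ≤ ‖u‖ * ‖v‖ :=
  (abs_real_inner_le_norm _ _).trans
    (mul_le_mul_of_nonneg_left (U.norm_starProjection_apply_le v) (norm_nonneg u))

lemma real_inner_starProjection_self_le (v : E) :
    inner ℝ v (U.starProjection v) ≤ inner ℝ v v :=
  (le_abs_self _).trans ((abs_real_inner_starProjection_le U v v).trans_eq
    (real_inner_self_eq_norm_mul_norm v).symm)

end StarProjection

section MixedDerivative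

variable {d : ℕ} {E : Type*} [NormedAddCommGroup E] [InnerProductSpace ℝ E] [CompleteSpace E]

/-- `Ψ` is the weak derivative `∂^k Φ` of the Hilbert space valued map `Φ`: every scalar function
`⟪u, Φ x⟫` has the derivative `⟪u, Ψ x⟫`. -/
def HasWeakMder (k : Fin d → ℕ) (Φ Ψ : (Fin d → ℝ) → E) : Prop :=
  ∀ u, mder d k (fun x => inner ℝ u (Φ x)) = fun x => inner ℝ u (Ψ x)

lemma HasWeakMder.mder2_inner {k l : Fin d → ℕ} {Φ Φk Φl : (Fin d → ℝ) → E}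
    (hk : HasWeakMder k Φ Φk) (hl : HasWeakMder l Φ Φl) (T : E →L[ℝ] E) (x y : Fin d → ℝ) :
    mder2 d k l (fun x y => inner ℝ (Φ x) (T (Φ y))) x y = inner ℝ (Φk x) (T (Φl y)) := by
  have second_argument (a : Fin d → ℝ) :
      mder d l (fun b => inner ℝ (Φ a) (T (Φ b))) y = inner ℝ (T (Φl y)) (Φ a) := by
    simp only [← ContinuousLinearMap.adjoint_inner_left, hl _]
    rw [ContinuousLinearMap.adjoint_inner_left, real_inner_comm]
  simp only [mder2, second_argument, hk _]
  exact real_inner_comm _ _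

end MixedDerivative

section Moments

variable {V : Type*} [NormedAddCommGroup V] [MeasurableSpace V] {μ : Measure V} {N : ℕ} {g : V → ℂ}

/-- The density `g` with respect to `μ` has finite absolute moments up to order `N`. -/
def HasMoments (μ : Measure V) (N : ℕ) (g : V → ℂ) : Prop :=
  Integrable (fun ξ => ((1 + ‖ξ‖) ^ N : ℝ) • g ξ) μ

lemma hasMoments_of_memLp (hμ : MemLp (fun ξ => (1 + ‖ξ‖) ^ N) 2 μ) (hg : MemLp g 2 μ) :
    HasMoments μ N g :=
  memLp_one_iff_integrable.1 (hg.smul hμ)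

variable [BorelSpace V]

lemma HasMoments.mul {p : ℕ} (hg : HasMoments μ (N + p) g) {m : V → ℂ} (hm : Continuous m)
    (hbound : ∀ ξ, ‖m ξ‖ ≤ (1 + ‖ξ‖) ^ p) : HasMoments μ N fun ξ => m ξ * g ξ := by
  have hpos (ξ : V) : 0 < (1 + ‖ξ‖) ^ p := by positivity
  have hcont : Continuous fun ξ => (((1 + ‖ξ‖) ^ p)⁻¹ : ℝ) • m ξ :=
    (Continuous.inv₀ (by fun_prop) fun ξ => (hpos ξ).ne').smul hm
  have hle (ξ : V) : ‖(((1 + ‖ξ‖) ^ p)⁻¹ : ℝ) • m ξ‖ ≤ 1 := by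
    rw [norm_smul, norm_inv, Real.norm_of_nonneg (hpos ξ).le]
    exact inv_mul_le_one_of_le₀ (hbound ξ) (hpos ξ).le
  refine (Integrable.bdd_mul hg hcont.aestronglyMeasurable (ae_of_all μ hle)).congr
    (ae_of_all μ fun ξ => ?_)
  simp only [pow_add, smul_mul_smul_comm, mul_left_comm _ _ ((1 + ‖ξ‖) ^ p),
    inv_mul_cancel₀ (hpos ξ).ne', mul_one]

lemma HasMoments.mono (hg : HasMoments μ N g) {M : ℕ} (hMN : M ≤ N) : HasMoments μ M g := by
  obtain ⟨p, rfl⟩ := Nat.exists_eq_add_of_le hMN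
  simpa only [one_mul] using hg.mul continuous_const (m := fun _ => 1) fun ξ => by
    simpa only [norm_one] using one_le_pow₀ (le_add_of_nonneg_right (norm_nonneg ξ))

lemma HasMoments.integrable (hg : HasMoments μ N g) : Integrable g μ := by
  simpa only [HasMoments, pow_zero, one_smul] using hg.mono (Nat.zero_le N)

lemma HasMoments.integrable_norm_pow_mul (hg : HasMoments μ N g) {n : ℕ} (hn : n ≤ N) :
    Integrable (fun ξ => ‖ξ‖ ^ n * ‖g ξ‖) μ := by
  refine (hg.mono hn).norm.mono'
    ((by fun_prop : Continuous _).aestronglyMeasurable.mul hg.integrable.1.norm)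
    (ae_of_all μ fun ξ => ?_)
  rw [norm_mul, norm_pow, norm_norm, norm_norm, norm_smul, norm_pow,
    Real.norm_of_nonneg (by positivity : 0 ≤ 1 + ‖ξ‖)]
  gcongr
  exact le_add_of_nonneg_left zero_le_one

end Moments

section Fourier

variable {d : ℕ} {μ : Measure (Fin d → ℝ)} {g : (Fin d → ℝ) → ℂ}

/-- The plane wave `e^{i⟨x, ξ⟩}`. -/
def planeWave (x ξ : Fin d → ℝ) : ℂ := Complex.exp ((x ⬝ᵥ ξ : ℝ) * Complex.I)

lemma continuous_planeWave (x : Fin d → ℝ) : Continuous (planeWave x) := by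
  unfold planeWave dotProduct
  fun_prop

lemma norm_planeWave (x ξ : Fin d → ℝ) : ‖planeWave x ξ‖ = 1 :=
  Complex.norm_exp_ofReal_mul_I _

/-- The Fourier multiplier `(iξ)^k` of `∂^k`. -/
def mderSymbol (k : Fin d → ℕ) (ξ : Fin d → ℝ) : ℂ := ∏ j, (Complex.I * ξ j) ^ k j

lemma mderSymbol_zero (ξ : Fin d → ℝ) : mderSymbol 0 ξ = 1 := by
  simp only [mderSymbol, Pi.zero_apply, pow_zero, Finset.prod_const_one]

lemma continuous_mderSymbol (k : Fin d → ℕ) : Continuous (mderSymbol k) := by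
  unfold mderSymbol
  fun_prop

lemma norm_I_mul_apply_le (ξ : Fin d → ℝ) (j : Fin d) : ‖Complex.I * ξ j‖ ≤ 1 + ‖ξ‖ := by
  rw [norm_mul, Complex.norm_I, one_mul, Complex.norm_real]
  exact (norm_le_pi_norm ξ j).trans (le_add_of_nonneg_left zero_le_one)

lemma norm_mderSymbol_le (k : Fin d → ℕ) (ξ : Fin d → ℝ) :
    ‖mderSymbol k ξ‖ ≤ (1 + ‖ξ‖) ^ ∑ j, k j := by
  simp only [mderSymbol, norm_prod, norm_pow, ← Finset.prod_pow_eq_pow_sum]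
  gcongr with j
  exact norm_I_mul_apply_le ξ j

/-- The real part of the Fourier transform `∫ e^{i⟨x, ξ⟩} g(ξ) dμ(ξ)`, without the factor `-2π` that
the library puts in the exponent. -/
def reFourier (μ : Measure (Fin d → ℝ)) (g : (Fin d → ℝ) → ℂ) (x : Fin d → ℝ) : ℝ :=
  ∫ ξ, (planeWave x ξ * g ξ).re ∂μ

/-- The pairing for which `VectorFourier.fourierIntegral`, whose kernel is `e^{-2πi L(ξ, x)}`,
integrates against plane waves. -/
def fourierPairing (d : ℕ) : (Fin d → ℝ) →L[ℝ] (Fin d → ℝ) →L[ℝ] ℝ :=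
  -(2 * Real.pi)⁻¹ • ∑ j, (ContinuousLinearMap.proj j : (Fin d → ℝ) →L[ℝ] ℝ).smulRight
    (ContinuousLinearMap.proj j : (Fin d → ℝ) →L[ℝ] ℝ)

lemma fourierPairing_apply (ξ x : Fin d → ℝ) :
    fourierPairing d ξ x = -(2 * Real.pi)⁻¹ * (x ⬝ᵥ ξ) := by
  simp [fourierPairing, dotProduct, mul_comm]

lemma fourierChar_neg_fourierPairing (ξ x : Fin d → ℝ) :
    (Real.fourierChar (-(fourierPairing d).toLinearMap₁₂ ξ x) : ℂ) = planeWave x ξ := by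
  have hphase : 2 * Real.pi * -(fourierPairing d ξ x) = x ⬝ᵥ ξ := by
    rw [fourierPairing_apply]
    field_simp
  rw [Real.fourierChar_apply, planeWave, ← hphase]
  rfl

lemma reFourier_eq_re_fourierIntegral (hg : Integrable g μ) :
    reFourier μ g = fun x => (VectorFourier.fourierIntegral Real.fourierChar μ
      (fourierPairing d).toLinearMap₁₂ g x).re := by
  funext x
  have hint : Integrable (fun ξ => planeWave x ξ * g ξ) μ :=
    hg.bdd_mul (continuous_planeWave x).aestronglyMeasurable
      (ae_of_all μ fun ξ => (norm_planeWave x ξ).le)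
  simp only [VectorFourier.fourierIntegral, Circle.smul_def, fourierChar_neg_fourierPairing,
    smul_eq_mul]
  exact integral_re hint

lemma contDiff_reFourier {N : ℕ} (hg : HasMoments μ N g) : ContDiff ℝ N (reFourier μ g) := by
  rw [reFourier_eq_re_fourierIntegral hg.integrable]
  exact Complex.reCLM.contDiff.comp (VectorFourier.contDiff_fourierIntegral (N := (N : ℕ∞)) _
    fun n hn => hg.integrable_norm_pow_mul (by exact_mod_cast hn))

lemma fourierSMulRight_fourierPairing_apply (ξ x : Fin d → ℝ) :
    VectorFourier.fourierSMulRight (fourierPairing d) g ξ x =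
      Complex.I * (x ⬝ᵥ ξ : ℝ) * g ξ := by
  have hpi : (Real.pi : ℂ) ≠ 0 := by exact_mod_cast Real.pi_ne_zero
  rw [VectorFourier.fourierSMulRight_apply, fourierPairing_apply, smul_eq_mul, Complex.real_smul]
  push_cast
  field_simp

lemma HasMoments.integrable_fourierSMulRight (hg : HasMoments μ 1 g) :
    Integrable (VectorFourier.fourierSMulRight (fourierPairing d) g) μ := by
  have h := (hg.integrable_norm_pow_mul le_rfl).const_mul (2 * Real.pi * ‖fourierPairing d‖)
  refine h.mono' hg.integrable.1.fourierSMulRight (ae_of_all μ fun ξ => ?_)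
  simpa only [pow_one, ← mul_assoc] using VectorFourier.norm_fourierSMulRight_le _ _ _

lemma pder_reFourier (hg : HasMoments μ 1 g) (j : Fin d) :
    pder d j (reFourier μ g) = reFourier μ fun ξ => Complex.I * ξ j * g ξ := by
  have hsymbol (ξ : Fin d → ℝ) :
      VectorFourier.fourierSMulRight (fourierPairing d) g ξ (Pi.single j 1) =
        Complex.I * ξ j * g ξ := by
    rw [fourierSMulRight_fourierPairing_apply, single_one_dotProduct]
  have hderiv (x : Fin d → ℝ) :=
    Complex.reCLM.hasFDerivAt.comp x (VectorFourier.hasFDerivAt_fourierIntegral (fourierPairing d)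
      hg.integrable (by simpa only [pow_one] using hg.integrable_norm_pow_mul le_rfl) x)
  have hint : Integrable (fun ξ => Complex.I * ξ j * g ξ) μ := by
    simpa only [hsymbol] using hg.integrable_fourierSMulRight.apply_continuousLinearMap
      (Pi.single j 1)
  rw [reFourier_eq_re_fourierIntegral hg.integrable, reFourier_eq_re_fourierIntegral hint]
  funext x
  simp only [← hsymbol]
  rw [← Real.fourierIntegral_continuousLinearMap_apply' hg.integrable_fourierSMulRight]
  exact congrArg (· (Pi.single j 1)) (hderiv x).fderiv

lemma iterate_pder_reFourier (j : Fin d) (n : ℕ) (hg : HasMoments μ n g) :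
    (pder d j)^[n] (reFourier μ g) = reFourier μ fun ξ => (Complex.I * ξ j) ^ n * g ξ := by
  induction n generalizing g with
  | zero => simp only [Function.iterate_zero, id_eq, pow_zero, one_mul]
  | succ n ih =>
    have hmul : HasMoments μ n fun ξ => Complex.I * ξ j * g ξ :=
      hg.mul (by fun_prop) fun ξ => by simpa only [pow_one] using norm_I_mul_apply_le ξ j
    rw [Function.iterate_succ_apply, pder_reFourier (hg.mono (Nat.succ_pos n)), ih hmul]
    simp only [pow_succ, mul_assoc]

lemma foldr_iterate_pder_reFourier (k : Fin d → ℕ) (l : List (Fin d)) {N : ℕ}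
    (hg : HasMoments μ (N + (l.map k).sum) g) :
    l.foldr (fun j f => (pder d j)^[k j] f) (reFourier μ g) =
        reFourier μ (fun ξ => (l.map fun j => (Complex.I * ξ j) ^ k j).prod * g ξ) ∧
      HasMoments μ N fun ξ => (l.map fun j => (Complex.I * ξ j) ^ k j).prod * g ξ := by
  induction l generalizing N with
  | nil => simpa using hg
  | cons j l ih =>
    simp only [List.map_cons, List.sum_cons, List.prod_cons, List.foldr_cons, mul_assoc] at hg ⊢
    obtain ⟨hderiv, hmoments⟩ := ih (N := N + k j) (by rwa [add_assoc])
    refine ⟨?_, hmoments.mul (by fun_prop) fun ξ => ?_⟩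
    · rw [hderiv, iterate_pder_reFourier j _ (hmoments.mono (Nat.le_add_left _ _))]
    · rw [norm_pow]
      gcongr
      exact norm_I_mul_apply_le ξ j

lemma mder_reFourier (k : Fin d → ℕ) (hg : HasMoments μ (∑ j, k j) g) :
    mder d k (reFourier μ g) = reFourier μ fun ξ => mderSymbol k ξ * g ξ := by
  have h := foldr_iterate_pder_reFourier k (List.finRange d) (N := 0)
    (by rwa [zero_add, ← List.ofFn_eq_map, List.sum_ofFn])
  simpa only [← List.ofFn_eq_map, List.prod_ofFn, mder, mderSymbol] using h.1

end Fourier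

section SpectralKernel

variable {d N : ℕ} {μ : Measure (Fin d → ℝ)}

/-- The stationary kernel on `ℝ^d` with spectral measure `μ`. -/
def spectralKernel (μ : Measure (Fin d → ℝ)) (x y : Fin d → ℝ) : ℝ :=
  ∫ ξ, Real.cos ((x - y) ⬝ᵥ ξ) ∂μ

lemma spectralKernel_eq_reFourier (x y : Fin d → ℝ) :
    spectralKernel μ x y = reFourier μ 1 (x - y) := by
  simp only [spectralKernel, reFourier, planeWave, Pi.one_apply, mul_one,
    Complex.exp_ofReal_mul_I_re]

lemma contDiff_spectralKernel (hμ : MemLp (fun ξ => (1 + ‖ξ‖) ^ N) 2 μ) :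
    ContDiff ℝ (2 * N : ℕ) fun p : (Fin d → ℝ) × (Fin d → ℝ) => spectralKernel μ p.1 p.2 := by
  have hmoments : HasMoments μ (2 * N) (1 : (Fin d → ℝ) → ℂ) := by
    simpa only [HasMoments, pow_mul', Pi.one_apply] using hμ.integrable_sq.smul_const (1 : ℂ)
  simp only [spectralKernel_eq_reFourier]
  exact (contDiff_reFourier hmoments).comp (contDiff_fst.sub contDiff_snd)

lemma norm_mderSymbol_mul_planeWave_le {k : Fin d → ℕ} (hk : ∑ j, k j ≤ N) (x ξ : Fin d → ℝ) :
    ‖mderSymbol k ξ * planeWave x ξ‖ ≤ ‖(1 + ‖ξ‖) ^ N‖ := by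
  have hbase : 1 ≤ 1 + ‖ξ‖ := le_add_of_nonneg_right (norm_nonneg ξ)
  rw [norm_mul, norm_planeWave, mul_one, Real.norm_of_nonneg (by positivity)]
  exact (norm_mderSymbol_le k ξ).trans (pow_le_pow_right₀ hbase hk)

lemma memLp_mderSymbol_mul_planeWave (hμ : MemLp (fun ξ => (1 + ‖ξ‖) ^ N) 2 μ) {k : Fin d → ℕ}
    (hk : ∑ j, k j ≤ N) (x : Fin d → ℝ) :
    MemLp (fun ξ => mderSymbol k ξ * planeWave x ξ) 2 μ :=
  hμ.mono ((continuous_mderSymbol k).mul (continuous_planeWave x)).aestronglyMeasurable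
    (ae_of_all μ (norm_mderSymbol_mul_planeWave_le hk x))

/-- The feature map `x ↦ ∂_x^k e^{i⟨x, ·⟩}` with values in `L²(μ)`. -/
def waveFeature (hμ : MemLp (fun ξ => (1 + ‖ξ‖) ^ N) 2 μ) {k : Fin d → ℕ} (hk : ∑ j, k j ≤ N)
    (x : Fin d → ℝ) : Lp ℂ 2 μ :=
  (memLp_mderSymbol_mul_planeWave hμ hk x).toLp _

variable (hμ : MemLp (fun ξ => (1 + ‖ξ‖) ^ N) 2 μ) {k : Fin d → ℕ} (hk : ∑ j, k j ≤ N)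

lemma norm_waveFeature_le (x : Fin d → ℝ) : ‖waveFeature hμ hk x‖ ≤ ‖hμ.toLp _‖ := by
  refine Lp.norm_le_norm_of_ae_le ?_
  filter_upwards [(memLp_mderSymbol_mul_planeWave hμ hk x).coeFn_toLp, hμ.coeFn_toLp]
    with ξ hwave hweight
  rw [waveFeature, hwave, hweight]
  exact norm_mderSymbol_mul_planeWave_le hk x ξ

lemma inner_waveFeature (u : Lp ℂ 2 μ) (x : Fin d → ℝ) :
    inner ℝ u (waveFeature hμ hk x) =
      reFourier μ (fun ξ => mderSymbol k ξ * (starRingEnd ℂ) (u ξ)) x := by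
  rw [L2.inner_def, reFourier]
  refine integral_congr_ae ?_
  filter_upwards [(memLp_mderSymbol_mul_planeWave hμ hk x).coeFn_toLp] with ξ hwave
  rw [Complex.inner, waveFeature, hwave]
  ring_nf

lemma hasWeakMder_waveFeature :
    HasWeakMder k (waveFeature hμ (k := 0) (by simp)) (waveFeature hμ hk) := by
  intro u
  have hmoments : HasMoments μ N fun ξ => (starRingEnd ℂ) (u ξ) :=
    hasMoments_of_memLp hμ (Lp.memLp u).star
  simp only [inner_waveFeature, mderSymbol_zero, one_mul]
  exact mder_reFourier k (hmoments.mono hk)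

lemma spectralKernel_eq_inner_waveFeature (x y : Fin d → ℝ) :
    spectralKernel μ x y =
      inner ℝ (waveFeature hμ (k := 0) (by simp) x) (waveFeature hμ (k := 0) (by simp) y) := by
  rw [real_inner_comm, inner_waveFeature, spectralKernel, reFourier]
  refine integral_congr_ae ?_
  filter_upwards [(memLp_mderSymbol_mul_planeWave hμ (k := 0) (by simp) y).coeFn_toLp] with ξ hwave
  rw [waveFeature, hwave, mderSymbol_zero, one_mul, one_mul, planeWave, planeWave,
    ← Complex.exp_conj, ← Complex.exp_add, ← Complex.exp_ofReal_mul_I_re, sub_dotProduct]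
  simp only [map_mul, Complex.conj_ofReal, Complex.conj_I]
  push_cast
  ring_nf

lemma mder2_condKernel_spectralKernel {ι : Type*} [Fintype ι] [DecidableEq ι] {w : ι → Fin d → ℝ}
    (hdet : IsUnit (Matrix.of fun i j => spectralKernel μ (w i) (w j)).det) (x y : Fin d → ℝ) :
    mder2 d k k (condKernel (spectralKernel μ) w) x y =
      inner ℝ (waveFeature hμ hk x) ((Submodule.span ℝ (Set.range
        (waveFeature hμ (k := 0) (by simp) ∘ w)))ᗮ.starProjection (waveFeature hμ hk y)) := by
  rw [← (hasWeakMder_waveFeature hμ hk).mder2_inner (hasWeakMder_waveFeature hμ hk)]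
  congr! 1
  funext x y
  exact condKernel_eq_inner_starProjection (spectralKernel_eq_inner_waveFeature hμ) hdet x y

lemma mder2_spectralKernel (x y : Fin d → ℝ) :
    mder2 d k k (spectralKernel μ) x y =
      inner ℝ (waveFeature hμ hk x) (waveFeature hμ hk y) := by
  have h := hasWeakMder_waveFeature hμ hk
  rw [funext₂ (spectralKernel_eq_inner_waveFeature hμ)]
  exact h.mder2_inner h (.id ℝ _) x y

end SpectralKernel

section Matern

/-- The spectral density `(1 + ‖ξ‖₂²)^{-(α+d/2)}` of the Matérn kernel. -/
def maternDensity (α : ℝ) (d : ℕ) (ξ : Fin d → ℝ) : ℝ :=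
  (1 + ∑ j, ξ j ^ 2) ^ (-(α + (d : ℝ) / 2))

/-- The spectral measure of the Matérn kernel. -/
def maternMeasure (α : ℝ) (d : ℕ) : Measure (Fin d → ℝ) :=
  volume.withDensity fun ξ => ENNReal.ofReal (maternDensity α d ξ)

variable {α : ℝ} {d : ℕ}

lemma maternDensity_nonneg (ξ : Fin d → ℝ) : 0 ≤ maternDensity α d ξ := by
  unfold maternDensity
  positivity

@[fun_prop]
lemma measurable_maternDensity : Measurable (maternDensity α d) := by
  unfold maternDensity
  fun_prop

lemma spectralKernel_maternMeasure :
    spectralKernel (maternMeasure α d) = fun x y => matern α d (x - y) := by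
  funext x y
  rw [spectralKernel, maternMeasure, integral_withDensity_eq_integral_toReal_smul (by fun_prop)
    (ae_of_all _ fun _ => ENNReal.ofReal_lt_top)]
  simp only [ENNReal.toReal_ofReal (maternDensity_nonneg _), smul_eq_mul,
    mul_comm (maternDensity α d _)]
  rfl

lemma sq_norm_le_sum_sq (ξ : Fin d → ℝ) : ‖ξ‖ ^ 2 ≤ ∑ j, ξ j ^ 2 := by
  rw [← Real.le_sqrt (norm_nonneg ξ) (by positivity)]
  refine (pi_norm_le_iff_of_nonneg (Real.sqrt_nonneg _)).2 fun j => Real.abs_le_sqrt ?_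
  exact Finset.single_le_sum (f := fun j => ξ j ^ 2) (fun i _ => sq_nonneg _) (Finset.mem_univ j)

lemma maternDensity_le (hα : 0 < α) (ξ : Fin d → ℝ) :
    maternDensity α d ξ ≤ 2 ^ ((2 * α + d) / 2) * (1 + ‖ξ‖) ^ (-(2 * α + d)) := by
  calc maternDensity α d ξ
      ≤ (1 + ‖ξ‖ ^ 2) ^ (-(α + (d : ℝ) / 2)) :=
        Real.rpow_le_rpow_of_nonpos (by positivity) (by gcongr; exact sq_norm_le_sum_sq ξ)
          (neg_nonpos.2 (by positivity))
    _ = (1 + ‖ξ‖ ^ 2) ^ (-(2 * α + d) / 2) := by congr 1; ring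
    _ ≤ _ := rpow_neg_one_add_norm_sq_le ξ (by positivity)

lemma memLp_maternMeasure {N : ℕ} (hα : (N : ℝ) < α) :
    MemLp (fun ξ => (1 + ‖ξ‖) ^ N) 2 (maternMeasure α d) := by
  have hα₀ : 0 < α := N.cast_nonneg.trans_lt hα
  have hint : Integrable fun ξ : Fin d → ℝ =>
      (2 : ℝ) ^ ((2 * α + d) / 2) * (1 + ‖ξ‖) ^ (-(2 * (α - N) + d)) := by
    refine (integrable_one_add_norm ?_).const_mul _
    simpa only [Module.finrank_fintype_fun_eq_card, Fintype.card_fin, lt_add_iff_pos_left,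
      Nat.ofNat_pos, mul_pos_iff_of_pos_left, sub_pos] using hα
  rw [memLp_two_iff_integrable_sq (by fun_prop : Continuous _).aestronglyMeasurable, maternMeasure,
    integrable_withDensity_iff_integrable_smul' (by fun_prop)
      (ae_of_all _ fun _ => ENNReal.ofReal_lt_top)]
  refine hint.mono' (by fun_prop) (ae_of_all _ fun ξ => ?_)
  have hbase : 0 < 1 + ‖ξ‖ := by positivity
  rw [ENNReal.toReal_ofReal (maternDensity_nonneg ξ), smul_eq_mul,
    Real.norm_of_nonneg (mul_nonneg (maternDensity_nonneg ξ) (by positivity))]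
  calc maternDensity α d ξ * ((1 + ‖ξ‖) ^ N) ^ 2
      ≤ 2 ^ ((2 * α + d) / 2) * (1 + ‖ξ‖) ^ (-(2 * α + d)) * ((1 + ‖ξ‖) ^ N) ^ 2 := by
        gcongr
        exact maternDensity_le hα₀ ξ
    _ = 2 ^ ((2 * α + d) / 2) * (1 + ‖ξ‖) ^ (-(2 * (α - N) + d)) := by
        rw [← pow_mul, ← Real.rpow_natCast, mul_assoc, ← Real.rpow_add hbase]
        congr 2
        push_cast
        ring

lemma lbelow_lt (hα : 0 < α) : (lbelow α : ℝ) < α := by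
  rw [lbelow, Nat.cast_pred (Nat.ceil_pos.2 hα), sub_lt_iff_lt_add]
  exact Nat.ceil_lt_add_one hα.le

end Matern

theorem stmt9_general {d N : ℕ} {μ : Measure (Fin d → ℝ)}
    (hμ : MemLp (fun ξ => (1 + ‖ξ‖) ^ N) 2 μ) :
    ∃ C : ℝ, 0 < C ∧
      ∀ (n : ℕ) (w : Fin n → Fin d → ℝ),
        IsUnit (Matrix.of fun i j => spectralKernel μ (w i) (w j)).det →
        ContDiff ℝ ((2 * N : ℕ) : ℕ∞)
          (fun p : (Fin d → ℝ) × (Fin d → ℝ) => condKernel (spectralKernel μ) w p.1 p.2) ∧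
        ∀ k : Fin d → ℕ, ∑ j, k j ≤ N →
          (∀ x₁ x₂, |mder2 d k k (condKernel (spectralKernel μ) w) x₁ x₂| ≤ C) ∧
          ∀ x, 0 ≤ mder2 d k k (condKernel (spectralKernel μ) w) x x ∧
            mder2 d k k (condKernel (spectralKernel μ) w) x x ≤
              mder2 d k k (spectralKernel μ) x x := by
  refine ⟨‖hμ.toLp _‖ * ‖hμ.toLp _‖ + 1, by positivity, fun n w hdet =>
    ⟨contDiff_condKernel (contDiff_spectralKernel hμ) w, fun k hk => ?_⟩⟩
  simp only [mder2_condKernel_spectralKernel hμ hk hdet, mder2_spectralKernel hμ hk]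
  refine ⟨fun x₁ x₂ => (abs_real_inner_starProjection_le _ _ _).trans ?_, fun x =>
    ⟨real_inner_starProjection_self_nonneg _ _, real_inner_starProjection_self_le _ _⟩⟩
  have h₁ := norm_waveFeature_le hμ hk x₁
  have h₂ := norm_waveFeature_le hμ hk x₂
  exact (mul_le_mul h₁ h₂ (norm_nonneg _) (norm_nonneg _)).trans
    (le_add_of_nonneg_right zero_le_one)

/-- Lemma `matern cond smooth`, boundedness part: the conditional kernel
`K̃` is `2⌊α⌋⁻`-times continuously differentiable on ℝ^{2d}, and with a constant `C`
independent of the conditioning set `A`, `|K̃^{(k,k)}(x₁,x₂)| ≤ C` and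
`0 ≤ K̃^{(k,k)}(x,x) ≤ K^{(k,k)}(x,x)` for all `|k| ≤ ⌊α⌋⁻`. -/
theorem stmt9 (α : ℝ) (hα : 0 < α) (d : ℕ) (hd : 1 ≤ d) :
    ∃ C : ℝ, 0 < C ∧
      ∀ (n : ℕ) (w : Fin n → Fin d → ℝ), Function.Injective w →
        IsUnit (maternMat α d w).det →
        ContDiff ℝ ((2 * lbelow α : ℕ) : ℕ∞)
          (fun p : (Fin d → ℝ) × (Fin d → ℝ) => condK α d w p.1 p.2) ∧
        ∀ k : Fin d → ℕ, (∑ j, k j) ≤ lbelow α →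
          (∀ x₁ x₂ : Fin d → ℝ, |mder2 d k k (condK α d w) x₁ x₂| ≤ C) ∧
          ∀ x : Fin d → ℝ,
            0 ≤ mder2 d k k (condK α d w) x x ∧
            mder2 d k k (condK α d w) x x ≤
              mder2 d k k (fun a b => matern α d (a - b)) x x := by
  obtain ⟨C, hC, h⟩ := stmt9_general (memLp_maternMeasure (d := d) (lbelow_lt hα))
  rw [spectralKernel_maternMeasure] at h
  exact ⟨C, hC, fun n w _ => h n w⟩
end
end
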